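/- arXiv:2306.08351 — 6 statements merged into one kernel-verified Lean document; each statement's English description precedes it below -/
import Mathlib

section
/- Let $A$ be an almost Poisson algebra over a field $k$ of characteristic zero, with commutative associative product $(a,b)\mapsto ab$ and anticommutative biderivation bracket $(a,b)\mapsto\{a,b\}$. Define the depolarized product $a\cdot b := ab + \{a,b\}$. Then $(A,\cdot)$ is a Kokoris algebra, i.e., for all $a_1,a_2,a_3\in A$ one has $J(a_1,a_2,a_3) = 4(a_1,a_2,a_3) - [[a_1,a_3],a_2]$, where $[x,y] = x\cdot y - y\cdot x$, $(x,y,z) = (x\cdot y)\cdot z - x\cdot(y\cdot z)$, and $J(x,y,z) = [[x,y],z] + [[y,z],x] + [[z,x],y]$. -/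
/-!
The commutator of the depolarized product is `2{x,y}`, so iterated commutators are `4{{x,y},z}`.
In the associator, associativity of the product cancels the purely commutative terms and the
Leibniz identity cancels the mixed ones, leaving `{{a,b},c} + {{b,c},a}` (`hasc` below). Adding
`-{{a,c},b} = {{c,a},b}` yields the Jacobiator of the bracket; multiply by `4`.
-/

/-- The depolarized product `a ⬝ b = ab + {a,b}` of an almost Poisson
algebra satisfies the Kokoris identity
`J(a₁,a₂,a₃) = 4(a₁,a₂,a₃) - [[a₁,a₃],a₂]`. -/
theorem almostPoisson_depolarization_isKokoris
    {k A : Type*} [Field k] [CharZero k] [AddCommGroup A] [Module k A]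
    (m : A →ₗ[k] A →ₗ[k] A) (br : A →ₗ[k] A →ₗ[k] A)
    (hcomm : ∀ a b : A, m a b = m b a)
    (hassoc : ∀ a b c : A, m (m a b) c = m a (m b c))
    (hanti : ∀ a b : A, br a b = - br b a)
    (hleib : ∀ a₁ a₂ a₃ : A, br (m a₁ a₂) a₃ = m (br a₁ a₃) a₂ + m a₁ (br a₂ a₃)) :
    ∀ a₁ a₂ a₃ : A,
      let dot : A → A → A := fun x y => m x y + br x y
      let lb : A → A → A := fun x y => dot x y - dot y x
      let asc : A → A → A → A := fun x y z => dot (dot x y) z - dot x (dot y z)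
      lb (lb a₁ a₂) a₃ + lb (lb a₂ a₃) a₁ + lb (lb a₃ a₁) a₂
        = (4 : k) • asc a₁ a₂ a₃ - lb (lb a₁ a₃) a₂ := by
  intro a b c dot lb asc
  have hlb : ∀ x y, lb x y = (2 : k) • br x y := by
    intro x y
    simp only [lb, dot]
    rw [hcomm y x, hanti y x]
    module
  have hlb2 : ∀ x y z, lb (lb x y) z = (4 : k) • br (br x y) z := by
    intro x y z
    rw [hlb, hlb, map_smul, LinearMap.smul_apply]
    module
  have hasc : asc a b c = br (br a b) c + br (br b c) a := by
    simp only [asc, dot, map_add, LinearMap.add_apply]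
    -- The Leibniz identity in the second slot follows from the first by anticommutativity.
    rw [hassoc a b c, hleib a b c, hanti a (m b c), hleib b c a, hanti a (br b c),
      hanti b a, hanti c a, hcomm b (-br a c)]
    simp only [map_neg, LinearMap.neg_apply]
    abel
  rw [hlb2, hlb2, hlb2, hlb2, hasc, hanti c a, map_neg, LinearMap.neg_apply]
  module
end

section
/- Let $A$ be a Kokoris algebra over a field $k$ of characteristic zero, with bilinear product $a\cdot b$ satisfying $J(a_1,a_2,a_3) = 4(a_1,a_2,a_3) - [[a_1,a_3],a_2]$. Define the polarized operations $a b := \tfrac{1}{2}(a\cdot b + b\cdot a)$ and $\{a,b\} := \tfrac{1}{2}(a\cdot b - b\cdot a)$. Then $(A, ab, \{\, ,\,\})$ is an almost Poisson algebra: the product $ab$ is commutative and associative, the bracket $\{a,b\}$ is anticommutative, and the Leibniz identity $\{a_1a_2,a_3\} = \{a_1,a_3\}a_2 + a_1\{a_2,a_3\}$ holds. -/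
/-!
Substituting `x ⬝ y = xy + {x,y}`, the terms `{{a,b},c} - {a,{b,c}}` on the two sides of the
Kokoris identity cancel, and what remains is `M(a,b,c) + Q(a,b,c) = 0`, where
`M(a,b,c) = (ab)c - a(bc)` and `Q(a,b,c) = {a,b}c - a{b,c} + {ab,c} - {a,bc}`.
Under `a ↔ c` the term `M` is antisymmetric and `Q` is symmetric, so both vanish (2 is
invertible); `M = 0` is associativity.

For Leibniz, put `L(a,b;c) = {ab,c} - {a,c}b - a{b,c}`. Then `Q(a,b,c) = L(a,b;c) + L(b,c;a)`,
hence `2 L(a,b;c) = Q(a,b,c) + Q(c,a,b) - Q(b,c,a) = 0`.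

In terms of the original product each identity is a `k`-linear combination of instances of the
Kokoris identity, whose difference of sides is `-4 (M + Q)`; this fixes the coefficients below.
-/

/-- Polarization of a Kokoris algebra product,
`ab := (a⬝b + b⬝a)/2` and `{a,b} := (a⬝b - b⬝a)/2`, yields an almost Poisson
algebra: the product is commutative and associative, the bracket is
anticommutative, and the Leibniz identity holds. -/
theorem kokoris_polarization_isAlmostPoisson
    {k A : Type*} [Field k] [CharZero k] [AddCommGroup A] [Module k A]
    (dot : A →ₗ[k] A →ₗ[k] A)
    (hkok : ∀ a₁ a₂ a₃ : A,
      let lb : A → A → A := fun x y => dot x y - dot y x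
      let asc : A → A → A → A := fun x y z => dot (dot x y) z - dot x (dot y z)
      lb (lb a₁ a₂) a₃ + lb (lb a₂ a₃) a₁ + lb (lb a₃ a₁) a₂
        = (4 : k) • asc a₁ a₂ a₃ - lb (lb a₁ a₃) a₂) :
    let m : A → A → A := fun x y => (2 : k)⁻¹ • (dot x y + dot y x)
    let br : A → A → A := fun x y => (2 : k)⁻¹ • (dot x y - dot y x)
    (∀ a b : A, m a b = m b a) ∧
    (∀ a b c : A, m (m a b) c = m a (m b c)) ∧
    (∀ a b : A, br a b = - br b a) ∧
    (∀ a₁ a₂ a₃ : A, br (m a₁ a₂) a₃ = m (br a₁ a₃) a₂ + m a₁ (br a₂ a₃)) := by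
  intro m br
  simp only [map_sub, LinearMap.sub_apply] at hkok
  refine ⟨fun a b => ?_, fun a b c => ?_, fun a b => ?_, fun a b c => ?_⟩
  · simp only [m, add_comm]
  · simp only [m, map_smul, map_add, LinearMap.smul_apply, LinearMap.add_apply]
    -- `M(a,b,c)` is the part of `M + Q` antisymmetric under `a ↔ c`.
    linear_combination (norm := module) (-(1 / 8) : k) • (hkok a b c - hkok c b a)
  · simp only [br]
    module
  · simp only [m, br, map_smul, map_add, map_sub, LinearMap.smul_apply, LinearMap.add_apply,
      LinearMap.sub_apply]
    -- Each `Q` is the symmetric part of `M + Q`, i.e. half a sum of two instances.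
    linear_combination (norm := module) (-(1 / 16) : k) • (hkok a b c + hkok c b a
      + (hkok c a b + hkok b a c) - (hkok b c a + hkok a c b))
end

section
/- Let $A$ be a vector space over a field $k$ of characteristic zero with a bilinear product $a\cdot b$, and let $\{a,b\}' := \tfrac{1}{2}(a\cdot b - b\cdot a)$. Then $A$ satisfies the Kokoris identity $J(a_1,a_2,a_3) = 4(a_1,a_2,a_3) - [[a_1,a_3],a_2]$ for all $a_1,a_2,a_3$ if and only if for all $a_1,a_2,a_3$ the associator of the product equals the associator of the bracket $\{\,,\,\}'$, i.e., $(a_1\cdot a_2)\cdot a_3 - a_1\cdot(a_2\cdot a_3) = \{\{a_1,a_2\}',a_3\}' - \{a_1,\{a_2,a_3\}'\}'$. -/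
/-!
The equivalence holds for each triple `a₁, a₂, a₃` separately. By antisymmetry
`[[a₃,a₁],a₂] = -[[a₁,a₃],a₂]`, so the Kokoris identity says
`4(a₁,a₂,a₃) = [[a₁,a₂],a₃] + [[a₂,a₃],a₁] = [[a₁,a₂],a₃] - [a₁,[a₂,a₃]]`, and the right-hand side
is four times the associator of the half-commutator. The two identities are therefore multiples of
each other by the scalar `-4`, once all terms are moved to one side.
-/

/-- A bilinear product satisfies the Kokoris identity
`J(a₁,a₂,a₃) = 4(a₁,a₂,a₃) - [[a₁,a₃],a₂]` if and only if the associator of the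
product equals the associator of the half-commutator `{x,y}' = (x⬝y - y⬝x)/2`. -/
theorem kokoris_iff_associators_equal
    {k A : Type*} [Field k] [CharZero k] [AddCommGroup A] [Module k A]
    (dot : A →ₗ[k] A →ₗ[k] A) :
    let lb : A → A → A := fun x y => dot x y - dot y x
    let asc : A → A → A → A := fun x y z => dot (dot x y) z - dot x (dot y z)
    let br' : A → A → A := fun x y => (2 : k)⁻¹ • (dot x y - dot y x)
    (∀ a₁ a₂ a₃ : A,
        lb (lb a₁ a₂) a₃ + lb (lb a₂ a₃) a₁ + lb (lb a₃ a₁) a₂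
          = (4 : k) • asc a₁ a₂ a₃ - lb (lb a₁ a₃) a₂)
      ↔ (∀ a₁ a₂ a₃ : A,
        dot (dot a₁ a₂) a₃ - dot a₁ (dot a₂ a₃)
          = br' (br' a₁ a₂) a₃ - br' a₁ (br' a₂ a₃)) := by
  intro lb asc br'
  refine forall_congr' fun a₁ => forall_congr' fun a₂ => forall_congr' fun a₃ => ?_
  simp only [lb, asc, br', map_sub, map_smul, LinearMap.sub_apply, LinearMap.smul_apply]
  constructor <;> intro h
  · linear_combination (norm := module) (-(4 : k)⁻¹) • h
  · linear_combination (norm := module) (-(4 : k)) • h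
end

section
/- Let $A$ be an almost Poisson algebra over a field $k$ of characteristic zero, with commutative associative product $ab$ and anticommutative biderivation bracket $\{a,b\}$, and let $c\in k$ be any scalar. Then the star product $a\star b := ab + c\,\{a,b\}$ makes $A$ a Kokoris algebra: for all $a_1,a_2,a_3\in A$, $J_\star(a_1,a_2,a_3) = 4(a_1,a_2,a_3)_\star - [[a_1,a_3]_\star,a_2]_\star$, where $[x,y]_\star = x\star y - y\star x$, $(x,y,z)_\star = (x\star y)\star z - x\star(y\star z)$, and $J_\star$ is the Jacobiator of $[\,,\,]_\star$. -/
/-!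
Since the product is commutative and the bracket anticommutative, `[x,y]⋆ = 2c{x,y}`, so every
double commutator is `4c²` times a double bracket. In the associator, the terms of order `c⁰` cancel
by associativity, and those of order `c` cancel by the Leibniz rule in both arguments, leaving
`(x,y,z)⋆ = c²({{x,y},z} + {{y,z},x})`. Both sides of the identity are therefore `4c²` times the
cyclic sum of double brackets; the Jacobi identity plays no role.
-/

/-- For an almost Poisson algebra and any scalar `c`, the star
product `a ⋆ b = ab + c{a,b}` satisfies the Kokoris identity
`J⋆(a₁,a₂,a₃) = 4(a₁,a₂,a₃)⋆ - [[a₁,a₃]⋆,a₂]⋆`. -/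
theorem almostPoisson_star_isKokoris
    {k A : Type*} [Field k] [CharZero k] [AddCommGroup A] [Module k A]
    (m : A →ₗ[k] A →ₗ[k] A) (br : A →ₗ[k] A →ₗ[k] A) (c : k)
    (hcomm : ∀ a b : A, m a b = m b a)
    (hassoc : ∀ a b c : A, m (m a b) c = m a (m b c))
    (hanti : ∀ a b : A, br a b = - br b a)
    (hleib : ∀ a₁ a₂ a₃ : A, br (m a₁ a₂) a₃ = m (br a₁ a₃) a₂ + m a₁ (br a₂ a₃)) :
    ∀ a₁ a₂ a₃ : A,
      let star : A → A → A := fun x y => m x y + c • br x y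
      let lb : A → A → A := fun x y => star x y - star y x
      let asc : A → A → A → A := fun x y z => star (star x y) z - star x (star y z)
      lb (lb a₁ a₂) a₃ + lb (lb a₂ a₃) a₁ + lb (lb a₃ a₁) a₂
        = (4 : k) • asc a₁ a₂ a₃ - lb (lb a₁ a₃) a₂ := by
  intro a₁ a₂ a₃ star lb asc
  have hlb : ∀ x y, lb x y = (2 * c) • br x y := by
    intro x y
    simp only [lb, star]
    rw [hcomm y x, hanti y x]
    module
  have hasc : ∀ x y z, asc x y z = (c ^ 2) • (br (br x y) z + br (br y z) x) := by
    intro x y z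
    simp only [asc, star, map_add, map_smul, LinearMap.add_apply, LinearMap.smul_apply]
    rw [hassoc, hleib x y z, hanti x (m y z), hleib y z x, hanti x (br y z), hanti y x,
      hanti z x, hcomm (br x z) y]
    simp only [map_neg, LinearMap.neg_apply]
    module
  simp only [hlb, hasc, map_smul, LinearMap.smul_apply]
  rw [hanti a₁ a₃]
  simp only [map_neg, LinearMap.neg_apply]
  module
end

section
/- Let $k$ be a field of characteristic zero, $A$ a $k$-vector space with a commutative bilinear product $(a,b)\mapsto ab$ and an anticommutative bilinear bracket $(a,b)\mapsto\{a,b\}$, and let $s\in k$ with $t := s^2$. Assume the Livernet–Loday relations with parameter $t$: $(a_1a_2)a_3 - a_1(a_2a_3) = t\,\{a_2,\{a_1,a_3\}\}$, $\{a_1a_2,a_3\} = \{a_1,a_3\}a_2 + a_1\{a_2,a_3\}$, and $\{\{a_1,a_2\},a_3\} + \{\{a_2,a_3\},a_1\} + \{\{a_3,a_1\},a_2\} = 0$. Then the depolarized product $a\cdot b := \tfrac{1}{2}(ab + s\{a,b\})$ is associative: $(a\cdot b)\cdot c = a\cdot(b\cdot c)$ for all $a,b,c\in A$. -/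
/-!
Expanding by bilinearity, four times the associator of the depolarized product is
`[(ab)c - a(bc)] + s [{ab,c} + {a,b}c - {a,bc} - a{b,c}] + s² [{{a,b},c} - {a,{b,c}}]`.
The coefficient of `s` vanishes by the Leibniz identity in both slots. By the Jacobi
identity the last bracket is `-{b,{a,c}}`, which cancels the product's associator
`s² {b,{a,c}}`.
-/

/-- If a commutative product and an anticommutative bracket satisfy
the Livernet–Loday relations with parameter `t = s²`, then the depolarized
product `a ⬝ b = (ab + s{a,b})/2` is associative. -/
theorem livernetLoday_depolarization_isAssociative
    {k A : Type*} [Field k] [CharZero k] [AddCommGroup A] [Module k A]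
    (m : A →ₗ[k] A →ₗ[k] A) (br : A →ₗ[k] A →ₗ[k] A) (s : k)
    (hcomm : ∀ a b : A, m a b = m b a)
    (hanti : ∀ a b : A, br a b = - br b a)
    (hLL : ∀ a₁ a₂ a₃ : A,
      m (m a₁ a₂) a₃ - m a₁ (m a₂ a₃) = (s ^ 2) • br a₂ (br a₁ a₃))
    (hleib : ∀ a₁ a₂ a₃ : A, br (m a₁ a₂) a₃ = m (br a₁ a₃) a₂ + m a₁ (br a₂ a₃))
    (hjac : ∀ a₁ a₂ a₃ : A,
      br (br a₁ a₂) a₃ + br (br a₂ a₃) a₁ + br (br a₃ a₁) a₂ = 0) :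
    ∀ a b c : A,
      let dot : A → A → A := fun x y => (2 : k)⁻¹ • (m x y + s • br x y)
      dot (dot a b) c = dot a (dot b c) := by
  intro a b c dot
  have hJ : br (br a b) c - br a (br b c) = - br b (br a c) := by
    have h := hjac a b c
    rw [hanti (br b c) a, hanti c a, map_neg, LinearMap.neg_apply, hanti (br a c) b,
      neg_neg] at h
    rw [← sub_eq_add_neg] at h
    exact eq_neg_of_add_eq_zero_left h
  have hL : br (m a b) c + m (br a b) c - br a (m b c) - m a (br b c) = 0 := by
    rw [hanti a (m b c), hleib a b c, hleib b c a, hanti b a, hanti c a,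
      hcomm b (-br a c)]
    simp only [map_neg, LinearMap.neg_apply]
    abel
  -- The associator with the two factors `1/2` pulled out.
  have key : m (m a b) c + s • m (br a b) c + s • (br (m a b) c + s • br (br a b) c)
      = m a (m b c) + s • m a (br b c) + s • (br a (m b c) + s • br a (br b c)) := by
    rw [← sub_eq_zero]
    calc _ = (m (m a b) c - m a (m b c))
          + s • (br (m a b) c + m (br a b) c - br a (m b c) - m a (br b c))
          + s ^ 2 • (br (br a b) c - br a (br b c)) := by module
      _ = 0 := by rw [hLL, hL, hJ]; module
  simp only [dot, map_smul, map_add, LinearMap.smul_apply, LinearMap.add_apply]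
  linear_combination (norm := module) ((2 : k)⁻¹ * (2 : k)⁻¹) • key
end

section
/- Let $k$ be a field of characteristic zero, $t\in k$, and let $A$ be a $k$-vector space with a commutative bilinear product $(a,b)\mapsto ab$ and an anticommutative bilinear bracket $(a,b)\mapsto\{a,b\}$ satisfying: (i) $(a_1a_2)a_3 - a_1(a_2a_3) = t\,\big(\{\{a_1,a_2\},a_3\} - \{\{a_3,a_2\},a_1\} + 2\{\{a_1,a_3\},a_2\}\big)$ and (ii) the Leibniz identity $\{a_1a_2,a_3\} = \{a_1,a_3\}a_2 + a_1\{a_2,a_3\}$. Then for all $a_1,a_2,a_3,a_4\in A$ the following identity holds: $t\,\big(\{\{\{a_1,a_2\},a_3\},a_4\} - \{\{\{a_3,a_2\},a_1\},a_4\} + 2\{\{\{a_1,a_3\},a_2\},a_4\}\big) = t\,\big(\{\{a_1,a_2\},\{a_3,a_4\}\} - \{\{\{a_3,a_4\},a_2\},a_1\} + 2\{\{a_1,\{a_3,a_4\}\},a_2\}\big) + t\,\big(\{\{\{a_1,a_4\},a_2\},a_3\} - \{\{a_3,a_2\},\{a_1,a_4\}\} + 2\{\{\{a_1,a_4\},a_3\},a_2\}\big)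 + t\,\big(\{\{a_1,\{a_2,a_4\}\},a_3\} - \{\{a_3,\{a_2,a_4\}\},a_1\} + 2\{\{a_1,a_3\},\{a_2,a_4\}\}\big)$, both sides being equal to $\{(a_1a_2)a_3 - a_1(a_2a_3),\, a_4\}$. -/
/-- The key exact computation in the proof of the main theorem:
under relations (i) `(a₁a₂)a₃ - a₁(a₂a₃) = t({{a₁,a₂},a₃} - {{a₃,a₂},a₁} + 2{{a₁,a₃},a₂})`
and (ii) `{a₁a₂,a₃} = {a₁,a₃}a₂ + a₁{a₂,a₃}`, computing
`{(a₁a₂)a₃ - a₁(a₂a₃), a₄}` in two ways yields the stated four-variable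
identity, both sides being equal to `{(a₁a₂)a₃ - a₁(a₂a₃), a₄}`. -/
theorem key_identity_for_t
    {k A : Type*} [Field k] [CharZero k] [AddCommGroup A] [Module k A]
    (m : A →ₗ[k] A →ₗ[k] A) (br : A →ₗ[k] A →ₗ[k] A) (t : k)
    (hcomm : ∀ a b : A, m a b = m b a)
    (hanti : ∀ a b : A, br a b = - br b a)
    (hrel1 : ∀ a₁ a₂ a₃ : A,
      m (m a₁ a₂) a₃ - m a₁ (m a₂ a₃)
        = t • (br (br a₁ a₂) a₃ - br (br a₃ a₂) a₁ + (2 : k) • br (br a₁ a₃) a₂))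
    (hrel2 : ∀ a₁ a₂ a₃ : A,
      br (m a₁ a₂) a₃ = m (br a₁ a₃) a₂ + m a₁ (br a₂ a₃)) :
    ∀ a₁ a₂ a₃ a₄ : A,
      t • (br (br (br a₁ a₂) a₃) a₄ - br (br (br a₃ a₂) a₁) a₄
            + (2 : k) • br (br (br a₁ a₃) a₂) a₄)
        = t • (br (br a₁ a₂) (br a₃ a₄) - br (br (br a₃ a₄) a₂) a₁
              + (2 : k) • br (br a₁ (br a₃ a₄)) a₂)
          + t • (br (br (br a₁ a₄) a₂) a₃ - br (br a₃ a₂) (br a₁ a₄)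
              + (2 : k) • br (br (br a₁ a₄) a₃) a₂)
          + t • (br (br a₁ (br a₂ a₄)) a₃ - br (br a₃ (br a₂ a₄)) a₁
              + (2 : k) • br (br a₁ a₃) (br a₂ a₄)) ∧
      t • (br (br (br a₁ a₂) a₃) a₄ - br (br (br a₃ a₂) a₁) a₄
            + (2 : k) • br (br (br a₁ a₃) a₂) a₄)
        = br (m (m a₁ a₂) a₃ - m a₁ (m a₂ a₃)) a₄ := by
  intro a₁ a₂ a₃ a₄
  have hlin : t • (br (br (br a₁ a₂) a₃) a₄ - br (br (br a₃ a₂) a₁) a₄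
            + (2 : k) • br (br (br a₁ a₃) a₂) a₄)
        = br (m (m a₁ a₂) a₃ - m a₁ (m a₂ a₃)) a₄ := by
    rw [hrel1]
    simp only [map_smul, map_add, map_sub, LinearMap.smul_apply, LinearMap.add_apply,
      LinearMap.sub_apply]
  refine ⟨?_, hlin⟩
  -- By the Leibniz rule, `{·, a₄}` acts on the associator `(a₁, a₂, a₃)` as a derivation, giving
  -- the sum of the associators `(a₁, a₂, {a₃, a₄})`, `({a₁, a₄}, a₂, a₃)`, `(a₁, {a₂, a₄}, a₃)`.
  rw [hlin, ← hrel1 a₁ a₂ (br a₃ a₄), ← hrel1 (br a₁ a₄) a₂ a₃, ← hrel1 a₁ (br a₂ a₄) a₃]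
  simp only [map_sub, LinearMap.sub_apply, hrel2, map_add, LinearMap.add_apply]
  abel
end
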